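/- arXiv:2102.10769 — 7 statements merged into one kernel-verified Lean document; each statement's English description precedes it below -/
import Mathlib

section
/- Simulation Lemma. Let S and A be finite nonempty types, s₀ ∈ S a fixed initial state, and H ∈ ℕ a horizon. For any two transition kernels P, P̂ : S × A → Δ(S), any two cost functions f, f̂ : S × A → [0,1], and any policy π : S → Δ(A), the value functions satisfy the identity V^π_{P;f} − V^π_{P̂;f̂} = ∑_{h=0}^{H−1} E_{(s,a)∼d^π_{P,h}}[ f(s,a) − f̂(s,a) + E_{s'∼P(s,a)} V^π_{P̂,f̂;h+1}(s') − E_{s'∼P̂(s,a)} V^π_{P̂,f̂;h+1}(s') ], and consequently V^π_{P;f} − V^π_{P̂;f̂} ≤ ∑_{h=0}^{H−1} E_{(s,a)∼d^π_{P,h}}[ f(s,a) − f̂(s,a) + (max_{h'≤H, s∈S} |V^π_{P̂,f̂;h'}(s)|) · ‖P(·|s,a) − P̂(·|s,a)‖₁ ]. -/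
open Finset

noncomputable section

/-- Value function with `k` steps to go, under transition kernel `P`,
policy `π` and cost `g`. -/
def Vsteps {S A : Type*} [Fintype S] [Fintype A]
    (P : S → A → S → ℝ) (π : S → A → ℝ) (g : S → A → ℝ) : ℕ → S → ℝ
  | 0, _ => 0
  | (k + 1), s => ∑ a, π s a * (g s a + ∑ s', P s a s' * Vsteps P π g k s')

/-- `Vh H P π g h s` is the value function `V^π_{P,g;h}(s)` for horizon `H`,
defined by the backward recursion `V_H = 0`,
`V_h(s) = E_{a∼π(s)}[g(s,a) + E_{s'∼P(s,a)} V_{h+1}(s')]`. -/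
def Vh {S A : Type*} [Fintype S] [Fintype A] (H : ℕ)
    (P : S → A → S → ℝ) (π : S → A → ℝ) (g : S → A → ℝ) (h : ℕ) (s : S) : ℝ :=
  Vsteps P π g (H - h) s

/-- Distribution over states at step `h`, starting at `s₀`, following `π` under `P`. -/
def stateDist {S A : Type*} [Fintype S] [Fintype A] [DecidableEq S]
    (s₀ : S) (P : S → A → S → ℝ) (π : S → A → ℝ) : ℕ → S → ℝ
  | 0, s => if s = s₀ then 1 else 0
  | (h + 1), s => ∑ s', ∑ a, stateDist s₀ P π h s' * π s' a * P s' a s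

/-- The step-`h` state-action occupancy measure
`d^π_{P,h}(s,a) = Pr(s_h = s, a_h = a | s₀, π, P)`. -/
def occ {S A : Type*} [Fintype S] [Fintype A] [DecidableEq S]
    (s₀ : S) (P : S → A → S → ℝ) (π : S → A → ℝ) (h : ℕ) (s : S) (a : A) : ℝ :=
  stateDist s₀ P π h s * π s a

theorem stateDist_push {S A : Type*} [Fintype S] [Fintype A] [DecidableEq S]
    (s₀ : S) (P : S → A → S → ℝ) (π : S → A → ℝ) (h : ℕ) (W : S → ℝ) :
    ∑ s, stateDist s₀ P π (h + 1) s * W s =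
      ∑ s, ∑ a, occ s₀ P π h s a * ∑ s', P s a s' * W s' := by
  simp only [stateDist, occ, Finset.sum_mul, Finset.mul_sum]
  rw [Finset.sum_comm]
  refine Finset.sum_congr rfl fun s _ => ?_
  rw [Finset.sum_comm]
  refine Finset.sum_congr rfl fun a _ => ?_
  refine Finset.sum_congr rfl fun s' _ => ?_
  ring

theorem stateDist_nonneg {S A : Type*} [Fintype S] [Fintype A] [DecidableEq S]
    (s₀ : S) (P : S → A → S → ℝ) (π : S → A → ℝ)
    (hP : ∀ s a s', 0 ≤ P s a s') (hπ : ∀ s a, 0 ≤ π s a) (h : ℕ) :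
    ∀ s, 0 ≤ stateDist s₀ P π h s := by
  induction h with
  | zero => intro s; simp only [stateDist]; split_ifs <;> norm_num
  | succ h ih =>
    intro s
    simp only [stateDist]
    exact Finset.sum_nonneg fun s' _ => Finset.sum_nonneg fun a _ =>
      mul_nonneg (mul_nonneg (ih s') (hπ s' a)) (hP s' a s)

theorem Vh_step {S A : Type*} [Fintype S] [Fintype A] (H : ℕ)
    (P : S → A → S → ℝ) (π : S → A → ℝ) (g : S → A → ℝ) (h : ℕ) (hh : h < H) (s : S) :
    Vh H P π g h s = ∑ a, π s a * (g s a + ∑ s', P s a s' * Vh H P π g (h + 1) s') := by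
  have e : H - h = (H - (h + 1)) + 1 := by omega
  simp only [Vh, e, Vsteps]

theorem sim_identity {S A : Type*} [Fintype S] [Fintype A] [DecidableEq S]
    (s₀ : S) (H : ℕ) (P Phat : S → A → S → ℝ) (f fhat : S → A → ℝ) (π : S → A → ℝ) :
    Vh H P π f 0 s₀ - Vh H Phat π fhat 0 s₀ =
      ∑ h ∈ range H, ∑ s, ∑ a, occ s₀ P π h s a *
        (f s a - fhat s a
          + (∑ s', P s a s' * Vh H Phat π fhat (h + 1) s')
          - ∑ s', Phat s a s' * Vh H Phat π fhat (h + 1) s') := by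
  have key : ∀ h ∈ range H, ∑ s, ∑ a, occ s₀ P π h s a *
        (f s a - fhat s a
          + (∑ s', P s a s' * Vh H Phat π fhat (h + 1) s')
          - ∑ s', Phat s a s' * Vh H Phat π fhat (h + 1) s') =
      (fun h => ∑ s, stateDist s₀ P π h s * (Vh H P π f h s - Vh H Phat π fhat h s)) h -
      (fun h => ∑ s, stateDist s₀ P π h s * (Vh H P π f h s - Vh H Phat π fhat h s)) (h + 1) := by
    intro h hh
    have hh := Finset.mem_range.1 hh
    simp only
    rw [stateDist_push, ← Finset.sum_sub_distrib]
    refine Finset.sum_congr rfl fun s _ => ?_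
    rw [Vh_step H P π f h hh, Vh_step H Phat π fhat h hh, ← Finset.sum_sub_distrib,
      Finset.mul_sum, ← Finset.sum_sub_distrib]
    refine Finset.sum_congr rfl fun a _ => ?_
    simp only [mul_sub, Finset.sum_sub_distrib, occ]
    ring
  rw [Finset.sum_congr rfl key, Finset.sum_range_sub']
  simp [stateDist, Vh, Vsteps]

/-- **Simulation Lemma.** For any two transition kernels `P`, `P̂`, any two cost
functions `f`, `f̂` with values in `[0,1]`, and any policy `π`, the difference of
values decomposes along the occupancy measures of `π` under `P`, and is bounded
using the `ℓ₁` distance between the kernels. -/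
theorem simulation_lemma {S A : Type*} [Fintype S] [Fintype A] [DecidableEq S]
    [Nonempty S] [Nonempty A]
    (s₀ : S) (H : ℕ)
    (P Phat : S → A → S → ℝ)
    (hP : ∀ s a, (∀ s', 0 ≤ P s a s') ∧ ∑ s', P s a s' = 1)
    (hPhat : ∀ s a, (∀ s', 0 ≤ Phat s a s') ∧ ∑ s', Phat s a s' = 1)
    (f fhat : S → A → ℝ)
    (hf : ∀ s a, f s a ∈ Set.Icc (0 : ℝ) 1)
    (hfhat : ∀ s a, fhat s a ∈ Set.Icc (0 : ℝ) 1)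
    (π : S → A → ℝ)
    (hπ : ∀ s, (∀ a, 0 ≤ π s a) ∧ ∑ a, π s a = 1) :
    (Vh H P π f 0 s₀ - Vh H Phat π fhat 0 s₀ =
      ∑ h ∈ range H, ∑ s, ∑ a, occ s₀ P π h s a *
        (f s a - fhat s a
          + (∑ s', P s a s' * Vh H Phat π fhat (h + 1) s')
          - ∑ s', Phat s a s' * Vh H Phat π fhat (h + 1) s')) ∧
    (Vh H P π f 0 s₀ - Vh H Phat π fhat 0 s₀ ≤
      ∑ h ∈ range H, ∑ s, ∑ a, occ s₀ P π h s a *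
        (f s a - fhat s a
          + ((range (H + 1)).sup' (by simp) fun h' =>
              (univ.sup' univ_nonempty fun s'' => |Vh H Phat π fhat h' s''|)) *
            ∑ s', |P s a s' - Phat s a s'|)) := by
  refine ⟨sim_identity s₀ H P Phat f fhat π, ?_⟩
  rw [sim_identity s₀ H P Phat f fhat π]
  refine Finset.sum_le_sum fun h hh => Finset.sum_le_sum fun s _ => Finset.sum_le_sum fun a _ => ?_
  refine mul_le_mul_of_nonneg_left ?_ (mul_nonneg
    (stateDist_nonneg s₀ P π (fun s a => (hP s a).1) (fun s => (hπ s).1) h s) ((hπ s).1 a))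
  rw [add_sub_assoc]
  refine add_le_add le_rfl ?_
  rw [← Finset.sum_sub_distrib, Finset.mul_sum]
  refine Finset.sum_le_sum fun s' _ => ?_
  rw [← sub_mul, mul_comm]
  refine (le_abs_self _).trans ?_
  rw [abs_mul]
  refine mul_le_mul_of_nonneg_right ?_ (abs_nonneg _)
  have h1 : h + 1 ∈ range (H + 1) := by simpa using hh
  refine le_trans ?_ (Finset.le_sup' (fun h' =>
    (univ.sup' univ_nonempty fun s'' => |Vh H Phat π fhat h' s''|)) h1)
  exact Finset.le_sup' (fun s'' => |Vh H Phat π fhat (h + 1) s''|) (Finset.mem_univ s')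

end
end

section
/- Optimism Lemma. Let S, A be finite nonempty sets, s₀ ∈ S, H ∈ ℕ with H ≥ 1, and let P*, P̂ : S × A → Δ(S) be transition kernels. Suppose there is an uncertainty measure σ : S × A → ℝ≥0 such that ‖P̂(·|s,a) − P*(·|s,a)‖₁ ≤ min{σ(s,a), 2} for all (s,a). Define the bonus b(s,a) := H · min{σ(s,a), 2}. Then for every cost function f : S → [0,1], letting f̃(s,a) := f(s) − b(s,a), and for every policy π : S → Δ(A), we have V^π_{P̂; f̃} ≤ V^π_{P*; f} (where on the right-hand side f is regarded as the cost (s,a) ↦ f(s)). -/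
open Finset

noncomputable section

/-- **Optimism Lemma.** If the learned model `P̂` is calibrated, i.e.
`‖P̂(·|s,a) − P*(·|s,a)‖₁ ≤ min{σ(s,a), 2}` for all `(s,a)`, and the bonus is
`b(s,a) = H·min{σ(s,a), 2}`, then for any state-dependent cost `f : S → [0,1]`,
the value of any policy `π` under `(P̂, f − b)` lower-bounds its value under
`(P*, f)`. -/
theorem optimism_lemma {S A : Type*} [Fintype S] [Fintype A]
    [Nonempty S] [Nonempty A]
    (s₀ : S) (H : ℕ) (hH : 1 ≤ H)
    (Pstar Phat : S → A → S → ℝ)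
    (hPstar : ∀ s a, (∀ s', 0 ≤ Pstar s a s') ∧ ∑ s', Pstar s a s' = 1)
    (hPhat : ∀ s a, (∀ s', 0 ≤ Phat s a s') ∧ ∑ s', Phat s a s' = 1)
    (σ : S → A → ℝ) (hσ : ∀ s a, 0 ≤ σ s a)
    (hcal : ∀ s a, ∑ s', |Phat s a s' - Pstar s a s'| ≤ min (σ s a) 2)
    (b : S → A → ℝ) (hb : ∀ s a, b s a = H * min (σ s a) 2)
    (f : S → ℝ) (hf : ∀ s, f s ∈ Set.Icc (0 : ℝ) 1)
    (π : S → A → ℝ)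
    (hπ : ∀ s, (∀ a, 0 ≤ π s a) ∧ ∑ a, π s a = 1) :
    Vh H Phat π (fun s a => f s - b s a) 0 s₀ ≤
      Vh H Pstar π (fun s _ => f s) 0 s₀ := by
  have hV : ∀ k s, 0 ≤ Vsteps Pstar π (fun s _ => f s) k s ∧
      Vsteps Pstar π (fun s _ => f s) k s ≤ k := by
    intro k
    induction k with
    | zero => intro s; simp [Vsteps]
    | succ k ih =>
      intro s
      simp only [Vsteps]
      constructor
      · refine Finset.sum_nonneg fun a _ => mul_nonneg ((hπ s).1 a) ?_
        exact add_nonneg (hf s).1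
          (Finset.sum_nonneg fun s' _ => mul_nonneg ((hPstar s a).1 s') (ih s').1)
      · calc _ ≤ ∑ a, π s a * ((k + 1 : ℕ) : ℝ) := by
              refine Finset.sum_le_sum fun a _ => mul_le_mul_of_nonneg_left ?_ ((hπ s).1 a)
              have h1 : ∑ s', Pstar s a s' * Vsteps Pstar π (fun s _ => f s) k s'
                  ≤ ∑ s', Pstar s a s' * (k : ℝ) :=
                Finset.sum_le_sum fun s' _ =>
                  mul_le_mul_of_nonneg_left (ih s').2 ((hPstar s a).1 s')
              rw [← Finset.sum_mul, (hPstar s a).2] at h1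
              have h2 := (hf s).2
              push_cast
              linarith
          _ = _ := by rw [← Finset.sum_mul, (hπ s).2, one_mul]
  have main : ∀ k, k ≤ H → ∀ s, Vsteps Phat π (fun s a => f s - b s a) k s ≤
      Vsteps Pstar π (fun s _ => f s) k s := by
    intro k
    induction k with
    | zero => intro _ s; simp [Vsteps]
    | succ k ih =>
      intro hk s
      have ih := ih (by omega)
      simp only [Vsteps]
      refine Finset.sum_le_sum fun a _ => mul_le_mul_of_nonneg_left ?_ ((hπ s).1 a)
      have h1 : ∑ s', Phat s a s' * Vsteps Phat π (fun s a => f s - b s a) k s'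
          ≤ ∑ s', (Pstar s a s' * Vsteps Pstar π (fun s _ => f s) k s'
            + |Phat s a s' - Pstar s a s'| * (H : ℝ)) := by
        refine Finset.sum_le_sum fun s' _ => ?_
        have e1 := mul_le_mul_of_nonneg_left (ih s') ((hPhat s a).1 s')
        have e2 := mul_le_mul_of_nonneg_right
          (le_abs_self (Phat s a s' - Pstar s a s')) (hV k s').1
        have hkH : (k : ℝ) ≤ H := by exact_mod_cast (by omega : k ≤ H)
        have e3 := mul_le_mul_of_nonneg_left ((hV k s').2.trans hkH)
          (abs_nonneg (Phat s a s' - Pstar s a s'))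
        linarith
      rw [Finset.sum_add_distrib, ← Finset.sum_mul] at h1
      have h2 := mul_le_mul_of_nonneg_right (hcal s a) (Nat.cast_nonneg (α := ℝ) H)
      have h3 := hb s a
      linarith
  exact main _ (by omega) s₀

end
end

section
/- Blocked elliptical potential lemma. Let d ≥ 1, λ > 0, T, H ∈ ℕ with T, H ≥ 1, and let φ_{t,h} ∈ ℝ^d for 0 ≤ t ≤ T−1, 0 ≤ h ≤ H−1 satisfy ‖φ_{t,h}‖₂ ≤ 1. Define the matrices Σ_t := λ I_d + ∑_{k=0}^{t−1} ∑_{h=0}^{H−1} φ_{k,h} φ_{k,h}ᵀ for 0 ≤ t ≤ T. Then ∑_{t=0}^{T−1} min{ ∑_{h=0}^{H−1} φ_{t,h}ᵀ Σ_t^{−1} φ_{t,h}, 1 } ≤ 2 ln( det(Σ_T) / det(λ I_d) ). -/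
open Finset Matrix

lemma one_add_sum_le_prod_aux {ι : Type*} (s : Finset ι) (f : ι → ℝ) (hf : ∀ i, 0 ≤ f i) :
    1 + ∑ i ∈ s, f i ≤ ∏ i ∈ s, (1 + f i) := by
  classical
  induction s using Finset.induction_on with
  | empty => simp
  | insert a s ha ih =>
    rw [Finset.sum_insert ha, Finset.prod_insert ha]
    have h1 := hf a
    have h2 : 0 ≤ ∑ i ∈ s, f i := Finset.sum_nonneg fun i _ => hf i
    nlinarith [mul_nonneg h1 h2, mul_le_mul_of_nonneg_left ih h1]

lemma one_add_trace_le_det {n : ℕ} (B : Matrix (Fin n) (Fin n) ℝ) (hB : B.PosSemidef) :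
    1 + B.trace ≤ (1 + B).det := by
  have h1 : (1 + B).det = ∏ i, (1 + hB.1.eigenvalues i) := by
    have h := congrArg (Polynomial.eval (-1)) hB.1.charpoly_eq
    rw [Matrix.eval_charpoly, Polynomial.eval_prod] at h
    have e : (Matrix.scalar (Fin n)) (-1 : ℝ) - B = -(1 + B) := by
      rw [map_neg, map_one]; abel
    rw [e, Matrix.det_neg] at h
    have e2 : ∀ i, Polynomial.eval (-1 : ℝ) (Polynomial.X - Polynomial.C ((hB.1.eigenvalues i : ℝ)))
        = (-1) * (1 + hB.1.eigenvalues i) := by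
      intro i; simp; ring
    have h' : (-1 : ℝ) ^ Fintype.card (Fin n) * (1 + B).det
        = ∏ i, ((-1) * (1 + hB.1.eigenvalues i)) := by
      rw [h]; exact Finset.prod_congr rfl fun i _ => e2 i
    rw [Finset.prod_mul_distrib, Finset.prod_const, Finset.card_univ] at h'
    exact mul_left_cancel₀ (pow_ne_zero _ (by norm_num)) h'
  have h2 : B.trace = ∑ i, hB.1.eigenvalues i := by
    simpa using hB.1.trace_eq_sum_eigenvalues
  rw [h1, h2]
  exact one_add_sum_le_prod_aux _ _ hB.eigenvalues_nonneg

lemma det_step {d H : ℕ} (A : Matrix (Fin d) (Fin d) ℝ) (hA : A.PosDef)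
    (v : ℕ → Fin d → ℝ) :
    A.det * (1 + ∑ h ∈ range H, v h ⬝ᵥ (A⁻¹ *ᵥ v h)) ≤
      (A + ∑ h ∈ range H, vecMulVec (v h) (v h)).det := by
  let V : Matrix (Fin d) (Fin H) ℝ := Matrix.of fun i h => v h i
  have hV : ∑ h ∈ range H, vecMulVec (v h) (v h) = V * Vᵀ := by
    ext i j
    rw [Matrix.sum_apply, Finset.sum_range, Matrix.mul_apply]
    rfl
  have htr : ∑ h ∈ range H, v h ⬝ᵥ (A⁻¹ *ᵥ v h) = (Vᵀ * A⁻¹ * V).trace := by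
    rw [Finset.sum_range, Matrix.trace]
    refine Finset.sum_congr rfl fun h _ => ?_
    rw [Matrix.mul_assoc]
    rfl
  have hB : (Vᵀ * A⁻¹ * V).PosSemidef := by
    have := hA.inv.posSemidef.conjTranspose_mul_mul_same V
    simpa using this
  rw [hV, htr, Matrix.det_add_mul _ _ (hA.det_pos.ne'.isUnit)]
  exact mul_le_mul_of_nonneg_left (one_add_trace_le_det _ hB) hA.det_pos.le

lemma min_le_two_log {x : ℝ} (hx : 0 ≤ x) : min x 1 ≤ 2 * Real.log (1 + x) := by
  have h0 : 0 ≤ min x 1 := le_min hx zero_le_one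
  have h1 := min_le_right x 1
  have h2 := Real.le_log_one_add_of_nonneg h0
  have h3 : Real.log (1 + min x 1) ≤ Real.log (1 + x) :=
    Real.log_le_log (by linarith) (by linarith [min_le_left x 1])
  have h4 : min x 1 / 2 ≤ 2 * min x 1 / (min x 1 + 2) := by
    rw [div_le_div_iff₀ (by norm_num) (by linarith)]
    nlinarith
  linarith

/-- **Blocked elliptical potential lemma.** For feature vectors `φ_{t,h} ∈ ℝ^d`
of Euclidean norm at most 1 and `Σ_t = λ I + ∑_{k<t} ∑_{h<H} φ_{k,h} φ_{k,h}ᵀ`,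
the sum over `t < T` of `min{∑_{h<H} φ_{t,h}ᵀ Σ_t⁻¹ φ_{t,h}, 1}` is at most
`2 ln(det Σ_T / det(λ I))`. -/
theorem blocked_elliptical_potential
    (d : ℕ) (hd : 1 ≤ d) (lam : ℝ) (hlam : 0 < lam)
    (T H : ℕ) (hT : 1 ≤ T) (hH : 1 ≤ H)
    (φ : ℕ → ℕ → EuclideanSpace ℝ (Fin d))
    (hφ : ∀ t < T, ∀ h < H, ‖φ t h‖ ≤ 1)
    (Sig : ℕ → Matrix (Fin d) (Fin d) ℝ)
    (hSig : ∀ t, Sig t = lam • (1 : Matrix (Fin d) (Fin d) ℝ) +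
      ∑ k ∈ range t, ∑ h ∈ range H, vecMulVec (φ k h) (φ k h)) :
    ∑ t ∈ range T, min (∑ h ∈ range H, φ t h ⬝ᵥ ((Sig t)⁻¹ *ᵥ φ t h)) 1 ≤
      2 * Real.log ((Sig T).det / (lam • (1 : Matrix (Fin d) (Fin d) ℝ)).det) := by
  have hpd : ∀ t, (Sig t).PosDef := by
    intro t
    rw [hSig]
    refine (Matrix.PosDef.one.smul hlam).add_posSemidef ?_
    refine Matrix.posSemidef_sum _ fun k _ => Matrix.posSemidef_sum _ fun h _ => ?_
    simpa using Matrix.posSemidef_vecMulVec_self_star (R := ℝ) (φ k h : Fin d → ℝ)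
  have h0 : Sig 0 = lam • (1 : Matrix (Fin d) (Fin d) ℝ) := by simp [hSig]
  rw [← h0, Real.log_div (hpd T).det_pos.ne' (hpd 0).det_pos.ne']
  clear hT hφ
  induction T with
  | zero => simp
  | succ T ih =>
    rw [Finset.sum_range_succ]
    have hs : Sig (T + 1) = Sig T + ∑ h ∈ range H, vecMulVec (φ T h) (φ T h) := by
      rw [hSig, hSig, Finset.sum_range_succ, add_assoc]
    have hx : 0 ≤ ∑ h ∈ range H, φ T h ⬝ᵥ ((Sig T)⁻¹ *ᵥ φ T h) := by
      refine Finset.sum_nonneg fun h _ => ?_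
      simpa using (hpd T).inv.posSemidef.dotProduct_mulVec_nonneg (φ T h : Fin d → ℝ)
    have hd := det_step (H := H) (Sig T) (hpd T) (fun h => φ T h)
    rw [← hs] at hd
    have hl := Real.log_le_log (mul_pos (hpd T).det_pos (by linarith)) hd
    rw [Real.log_mul (hpd T).det_pos.ne' (by linarith)] at hl
    have := min_le_two_log hx
    linarith
end

section
/- Log-determinant growth bound. Let d ≥ 1, λ > 0, M ∈ ℕ, and let φ_1, …, φ_M ∈ ℝ^d with ‖φ_i‖₂ ≤ 1 for all i. Then ln( det( λ I_d + ∑_{i=1}^M φ_i φ_iᵀ ) / det(λ I_d) ) ≤ d · ln( 1 + M / (d λ) ); in particular this quantity is at most d · ln(1 + M/λ). -/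
open Finset Matrix

/-- **Log-determinant growth bound.** For `M` vectors `φ_i ∈ ℝ^d` of Euclidean
norm at most 1 and `λ > 0`,
`ln(det(λ I + ∑ᵢ φᵢφᵢᵀ)/det(λ I)) ≤ d·ln(1 + M/(dλ)) ≤ d·ln(1 + M/λ)`. -/
theorem logdet_growth_bound
    (d : ℕ) (hd : 1 ≤ d) (lam : ℝ) (hlam : 0 < lam)
    (M : ℕ) (φ : Fin M → EuclideanSpace ℝ (Fin d))
    (hφ : ∀ i, ‖φ i‖ ≤ 1) :
    Real.log ((lam • (1 : Matrix (Fin d) (Fin d) ℝ) +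
          ∑ i, vecMulVec (φ i) (φ i)).det /
        (lam • (1 : Matrix (Fin d) (Fin d) ℝ)).det) ≤
      d * Real.log (1 + M / (d * lam)) ∧
    (d : ℝ) * Real.log (1 + M / (d * lam)) ≤ d * Real.log (1 + M / lam) := by
  have hd0 : (0 : ℝ) < d := by exact_mod_cast hd
  have hM : (0 : ℝ) ≤ M := Nat.cast_nonneg M
  have hd1 : (1 : ℝ) ≤ d := by exact_mod_cast hd
  refine ⟨?_, ?_⟩
  swap
  · refine mul_le_mul_of_nonneg_left (Real.log_le_log (by positivity) ?_) hd0.le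
    have : (M : ℝ) / (d * lam) ≤ M / lam :=
      div_le_div_of_nonneg_left hM hlam (by nlinarith)
    linarith
  set A : Matrix (Fin d) (Fin d) ℝ :=
    lam • (1 : Matrix (Fin d) (Fin d) ℝ) + ∑ i, vecMulVec (φ i) (φ i) with hA
  have hpd : A.PosDef := by
    refine Matrix.PosDef.add_posSemidef (Matrix.PosDef.one.smul hlam) ?_
    refine Matrix.posSemidef_sum _ fun i _ => ?_
    simpa using Matrix.posSemidef_vecMulVec_self_star (φ i : Fin d → ℝ)
  have hH := hpd.isHermitian
  have htr : A.trace ≤ d * lam + M := by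
    have h1 : A.trace = d * lam + ∑ i, (‖φ i‖ ^ 2) := by
      simp only [hA, Matrix.trace_add, Matrix.trace_smul, Matrix.trace_one, Matrix.trace_sum,
        Fintype.card_fin, smul_eq_mul, mul_comm]
      congr 1
      refine Finset.sum_congr rfl fun i _ => ?_
      rw [EuclideanSpace.real_norm_sq_eq]
      simp [Matrix.trace, vecMulVec_apply, sq]
    have h2 : ∑ i, (‖φ i‖ ^ 2) ≤ ∑ _i : Fin M, (1 : ℝ) :=
      Finset.sum_le_sum fun i _ => pow_le_one₀ (norm_nonneg _) (hφ i)
    simp at h2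
    linarith
  have hdet : A.det = ∏ i, hH.eigenvalues i := by simpa using hH.det_eq_prod_eigenvalues
  have htr' : A.trace = ∑ i, hH.eigenvalues i := by simpa using hH.trace_eq_sum_eigenvalues
  have hpos : ∀ i, 0 < hH.eigenvalues i := hpd.eigenvalues_pos
  have hc : 0 < 1 + (M : ℝ) / (d * lam) := by positivity
  have hc' : 0 < lam * (1 + (M : ℝ) / (d * lam)) := by positivity
  have hlog : Real.log A.det ≤ d * Real.log (lam * (1 + (M : ℝ) / (d * lam))) := by
    rw [hdet, Real.log_prod (fun i _ => (hpos i).ne')]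
    set c := lam * (1 + (M : ℝ) / (d * lam)) with hcdef
    have hcd : d * c = d * lam + M := by rw [hcdef]; field_simp
    have h : ∀ i, Real.log (hH.eigenvalues i) ≤ Real.log c + hH.eigenvalues i / c - 1 := by
      intro i
      have := Real.log_le_sub_one_of_pos (div_pos (hpos i) hc')
      rw [Real.log_div (hpos i).ne' hc'.ne'] at this
      linarith
    refine (Finset.sum_le_sum fun i _ => h i).trans ?_
    rw [Finset.sum_sub_distrib, Finset.sum_add_distrib, ← Finset.sum_div, ← htr']
    simp only [Finset.sum_const, Finset.card_univ, Fintype.card_fin, nsmul_eq_mul, mul_one]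
    have : A.trace / c ≤ d := by
      rw [div_le_iff₀ hc']; linarith
    linarith
  have hdl : (lam • (1 : Matrix (Fin d) (Fin d) ℝ)).det = lam ^ d := by
    simp [Matrix.det_smul]
  rw [hdl, Real.log_div hpd.det_pos.ne' (by positivity), Real.log_pow]
  rw [Real.log_mul hlam.ne' hc.ne'] at hlog
  linarith
end

section
/- Information-gain bound for kernelized nonlinear regulators (core chain of the KNR information-gain proposition). Let d ≥ 1, λ > 0, T, H ∈ ℕ with T, H ≥ 1, and let φ_{t,h} ∈ ℝ^d for 0 ≤ t ≤ T−1, 0 ≤ h ≤ H−1 with ‖φ_{t,h}‖₂ ≤ 1. Define Σ_t := λ I_d + ∑_{k=0}^{t−1} ∑_{h=0}^{H−1} φ_{k,h} φ_{k,h}ᵀ. Let (c_t)_{t=0}^{T−1} be a nondecreasing sequence of reals with c_t ≥ 1 for all t. Then ∑_{t=0}^{T−1} ∑_{h=0}^{H−1} min{ c_t · φ_{t,h}ᵀ Σ_t^{−1} φ_{t,h}, 1 } ≤ 2 H c_{T−1} · ln( det(Σ_T) / det(λ I_d) ) ≤ 2 H c_{T−1} · d · ln( 1 + T H / λ ). 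-/
open Finset Matrix

lemma aux_det_rank_one {d : ℕ} (A : Matrix (Fin d) (Fin d) ℝ) (hA : A.PosDef) (v : Fin d → ℝ) :
    (A + vecMulVec v v).det = A.det * (1 + v ⬝ᵥ (A⁻¹ *ᵥ v)) := by
  have hu : IsUnit A.det := hA.det_pos.ne'.isUnit
  have h := det_add_replicateCol_mul_replicateRow (ι := Unit) hu v v
  rw [vecMulVec_eq Unit, h]
  congr 1
  rw [det_unique]
  rw [Matrix.mul_assoc, ← replicateCol_mulVec, Matrix.add_apply, Matrix.one_apply_eq,
    Matrix.replicateRow_mul_replicateCol_apply]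

lemma aux_posSemidef {d : ℕ} (v : Fin d → ℝ) : (vecMulVec v v).PosSemidef := by
  simpa using posSemidef_vecMulVec_self_star v

lemma aux_quad_nonneg {d : ℕ} (A : Matrix (Fin d) (Fin d) ℝ) (hA : A.PosDef) (v : Fin d → ℝ) :
    0 ≤ v ⬝ᵥ (A⁻¹ *ᵥ v) := by
  simpa using hA.inv.posSemidef.dotProduct_mulVec_nonneg v

lemma aux_posDef_sum {d : ℕ} (A : Matrix (Fin d) (Fin d) ℝ) (hA : A.PosDef)
    (v : ℕ → Fin d → ℝ) (s : Finset ℕ) :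
    (A + ∑ h ∈ s, vecMulVec (v h) (v h)).PosDef :=
  hA.add_posSemidef (posSemidef_sum s fun i _ => aux_posSemidef (v i))

lemma aux_det_mono {d : ℕ} (A : Matrix (Fin d) (Fin d) ℝ) (hA : A.PosDef)
    (v : ℕ → Fin d → ℝ) (s : Finset ℕ) :
    A.det ≤ (A + ∑ h ∈ s, vecMulVec (v h) (v h)).det := by
  induction s using Finset.induction_on with
  | empty => simp
  | insert a s ha ih =>
    rw [sum_insert ha, add_comm (vecMulVec _ _), ← add_assoc,
      aux_det_rank_one _ (aux_posDef_sum A hA v s)]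
    have h1 := aux_quad_nonneg _ (aux_posDef_sum A hA v s) (v a)
    have h2 := (aux_posDef_sum A hA v s).det_pos
    nlinarith [mul_nonneg h2.le h1]

lemma aux_step {d : ℕ} (A : Matrix (Fin d) (Fin d) ℝ) (hA : A.PosDef)
    (v : ℕ → Fin d → ℝ) (s : Finset ℕ) (a : ℕ) (ha : a ∈ s) :
    A.det * (1 + v a ⬝ᵥ (A⁻¹ *ᵥ v a)) ≤ (A + ∑ h ∈ s, vecMulVec (v h) (v h)).det := by
  rw [← aux_det_rank_one A hA, ← add_sum_erase s _ ha, ← add_assoc]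
  exact aux_det_mono _ (hA.add_posSemidef (aux_posSemidef (v a))) v _

lemma aux_min (c x : ℝ) (hc : 1 ≤ c) (hx : 0 ≤ x) :
    min (c * x) 1 ≤ c * (2 * Real.log (1 + x)) := by
  have h1 : min x 1 ≤ 2 * Real.log (1 + x) := by
    rcases le_total x 1 with h | h
    · rw [min_eq_left h]
      have := Real.one_sub_inv_le_log_of_pos (show 0 < 1 + x by linarith)
      have h3 : x / 2 ≤ 1 - (1 + x)⁻¹ := by
        rw [show 1 - (1 + x)⁻¹ = x / (1 + x) by field_simp; ring]
        gcongr
        linarith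
      linarith
    · rw [min_eq_right h]
      have := Real.log_le_log (by norm_num) (show (2 : ℝ) ≤ 1 + x by linarith)
      have := Real.log_two_gt_d9
      linarith
  calc min (c * x) 1 ≤ c * min x 1 := by
        rw [mul_min_of_nonneg _ _ (by linarith)]
        exact min_le_min le_rfl (by linarith)
    _ ≤ _ := by gcongr

lemma aux_log_det {d : ℕ} (A : Matrix (Fin d) (Fin d) ℝ) (hA : A.PosDef) (M : ℝ) (hM : 0 < M)
    (htr : A.trace ≤ d * M) : Real.log A.det ≤ d * Real.log M := by
  have h1 := hA.isHermitian.det_eq_prod_eigenvalues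
  have h2 := hA.isHermitian.trace_eq_sum_eigenvalues
  simp only [RCLike.ofReal_real_eq_id, id] at h1 h2
  rw [h1, Real.log_prod (fun i _ => (hA.eigenvalues_pos i).ne')]
  have h3 : ∀ i ∈ univ, Real.log (hA.isHermitian.eigenvalues i) ≤
      hA.isHermitian.eigenvalues i / M - 1 + Real.log M := by
    intro i _
    have := Real.log_le_sub_one_of_pos (div_pos (hA.eigenvalues_pos i) hM)
    rw [Real.log_div (hA.eigenvalues_pos i).ne' hM.ne'] at this
    linarith
  refine (sum_le_sum h3).trans ?_
  rw [sum_add_distrib, sum_sub_distrib, ← sum_div, ← h2]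
  have h4 : A.trace / M ≤ d := by rwa [div_le_iff₀ hM]
  simp
  linarith


/-- **Information-gain bound for kernelized nonlinear regulators.** For feature
vectors of Euclidean norm at most 1, `Σ_t = λ I + ∑_{k<t} ∑_{h<H} φ_{k,h}φ_{k,h}ᵀ`,
and a nondecreasing sequence `c_t ≥ 1`,
`∑_{t<T} ∑_{h<H} min{c_t · φ_{t,h}ᵀ Σ_t⁻¹ φ_{t,h}, 1}
  ≤ 2 H c_{T−1} ln(det Σ_T / det(λ I)) ≤ 2 H c_{T−1} d ln(1 + TH/λ)`. -/
theorem knr_information_gain_chain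
    (d : ℕ) (hd : 1 ≤ d) (lam : ℝ) (hlam : 0 < lam)
    (T H : ℕ) (hT : 1 ≤ T) (hH : 1 ≤ H)
    (φ : ℕ → ℕ → EuclideanSpace ℝ (Fin d))
    (hφ : ∀ t < T, ∀ h < H, ‖φ t h‖ ≤ 1)
    (Sig : ℕ → Matrix (Fin d) (Fin d) ℝ)
    (hSig : ∀ t, Sig t = lam • (1 : Matrix (Fin d) (Fin d) ℝ) +
      ∑ k ∈ range t, ∑ h ∈ range H, vecMulVec (φ k h) (φ k h))
    (c : ℕ → ℝ) (hc_mono : Monotone c) (hc_one : ∀ t, 1 ≤ c t) :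
    (∑ t ∈ range T, ∑ h ∈ range H,
        min (c t * (φ t h ⬝ᵥ ((Sig t)⁻¹ *ᵥ φ t h))) 1 ≤
      2 * H * c (T - 1) *
        Real.log ((Sig T).det / (lam • (1 : Matrix (Fin d) (Fin d) ℝ)).det)) ∧
    (2 * H * c (T - 1) *
        Real.log ((Sig T).det / (lam • (1 : Matrix (Fin d) (Fin d) ℝ)).det) ≤
      2 * H * c (T - 1) * d * Real.log (1 + T * H / lam)) := by

  have hbase : (lam • (1 : Matrix (Fin d) (Fin d) ℝ)).PosDef := PosDef.one.smul hlam
  have hpd : ∀ t, (Sig t).PosDef := by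
    intro t
    rw [hSig]
    exact hbase.add_posSemidef (posSemidef_sum _ fun k _ =>
      posSemidef_sum _ fun h _ => aux_posSemidef _)
  have hsucc : ∀ t, Sig (t + 1) = Sig t + ∑ h ∈ range H, vecMulVec (φ t h) (φ t h) := by
    intro t
    rw [hSig, hSig, sum_range_succ, add_assoc]
  have h0 : Sig 0 = lam • (1 : Matrix (Fin d) (Fin d) ℝ) := by rw [hSig]; simp
  have hcT : 0 < c (T - 1) := lt_of_lt_of_le one_pos (hc_one _)
  rw [← h0, Real.log_div (hpd T).det_pos.ne' (hpd 0).det_pos.ne']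
  constructor
  · have hq : ∀ t ∈ range T, ∑ h ∈ range H,
        min (c t * (φ t h ⬝ᵥ ((Sig t)⁻¹ *ᵥ φ t h))) 1 ≤
        2 * H * c (T - 1) * (Real.log (Sig (t + 1)).det - Real.log (Sig t).det) := by
      intro t ht
      have hterm : ∀ h ∈ range H, min (c t * (φ t h ⬝ᵥ ((Sig t)⁻¹ *ᵥ φ t h))) 1 ≤
          c (T - 1) * (2 * (Real.log (Sig (t + 1)).det - Real.log (Sig t).det)) := by
        intro h hh
        have hx := aux_quad_nonneg (Sig t) (hpd t) (φ t h)
        have hs := aux_step (Sig t) (hpd t) (fun h => φ t h) (range H) h hh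
        rw [← hsucc] at hs
        have hdp := (hpd t).det_pos
        have hl := Real.log_le_log (mul_pos hdp (by linarith)) hs
        rw [Real.log_mul hdp.ne' (by linarith)] at hl
        have hlx := Real.log_nonneg (show 1 ≤ 1 + φ t h ⬝ᵥ ((Sig t)⁻¹ *ᵥ φ t h) by linarith)
        have hct : c t ≤ c (T - 1) := hc_mono (by have := mem_range.1 ht; omega)
        refine (aux_min _ _ (hc_one t) hx).trans ?_
        refine mul_le_mul hct (by linarith) (by linarith) hcT.le
      refine (sum_le_sum hterm).trans (le_of_eq ?_)
      simp
      ring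
    refine (sum_le_sum hq).trans (le_of_eq ?_)
    rw [← mul_sum, sum_range_sub (fun t => Real.log (Sig t).det)]
  · have hM : 0 < lam + T * H := by positivity
    have htr : (Sig T).trace ≤ d * (lam + T * H) := by
      have hb : ∑ k ∈ range T, ∑ h ∈ range H, (vecMulVec (φ k h) (φ k h)).trace ≤ T * H := by
        have : ∀ k ∈ range T, ∑ h ∈ range H, (vecMulVec (φ k h) (φ k h)).trace ≤ H := by
          intro k hk
          have : ∀ h ∈ range H, (vecMulVec (φ k h) (φ k h)).trace ≤ 1 := by
            intro h hh
            have h1 := hφ k (mem_range.1 hk) h (mem_range.1 hh)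
            have h2 : (vecMulVec (φ k h) (φ k h)).trace = ‖φ k h‖ ^ 2 := by
              rw [EuclideanSpace.real_norm_sq_eq, trace_vecMulVec]
              simp [dotProduct, sq]
            rw [h2]
            exact pow_le_one₀ (norm_nonneg _) h1
          simpa using sum_le_sum this
        simpa using sum_le_sum this
      have : (Sig T).trace = d * lam +
          ∑ k ∈ range T, ∑ h ∈ range H, (vecMulVec (φ k h) (φ k h)).trace := by
        rw [hSig]
        simp only [trace_add, trace_sum, trace_smul, trace_one]
        simp [mul_comm]
      rw [this]
      have hd' : (1 : ℝ) ≤ d := by exact_mod_cast hd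
      have : (0 : ℝ) ≤ T * H := by positivity
      nlinarith
    have hlog := aux_log_det (Sig T) (hpd T) _ hM htr
    have hd0 : Real.log (Sig 0).det = d * Real.log lam := by
      rw [h0]; simp [det_smul]
    have he : (1 : ℝ) + T * H / lam = (lam + T * H) / lam := by field_simp
    rw [he, Real.log_div hM.ne' hlam.ne', hd0, mul_assoc _ (d : ℝ)]
    refine mul_le_mul_of_nonneg_left (by linarith) (by positivity)
end

section
/- Optimistic min-max imitation step (intermediate claim in the proof of the main theorem). Consider a finite-horizon MDP with finite S, A, initial state s₀, horizon H ≥ 1, and true transition kernel P*. Let P̂ be another transition kernel, let F be a finite set of functions f : S → [0,1] containing the true cost c, let Π be a set of policies containing the expert policy π^e, and let b : S × A → ℝ≥0 be a bonus satisfying the optimism property at π^e: for every f ∈ F, E_{(s,a)∼d^{π^e}_{P̂}}[ f(s) − b(s,a) ] ≤ E_{s∼d^{π^e}_{P*}}[ f(s) ]. Let Ê : F → ℝ be an estimator with | E_{s∼d^{π^e}_{P*}}[f(s)] − Ê(f) | ≤ ε for all f ∈ F. If π̂ ∈ argmin_{π∈Π} max_{f∈F} [ E_{(s,a)∼d^{π}_{P̂}}[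 f(s) − b(s,a) ] − Ê(f) ], then E_{(s,a)∼d^{π̂}_{P̂}}[ c(s) − b(s,a) ] ≤ E_{s∼d^{π^e}_{P*}}[ c(s) ] + 2ε. -/
open Finset

noncomputable section

/-- The average state-action occupancy measure
`d^π_P(s,a) = (1/H) ∑_{h<H} d^π_{P,h}(s,a)`. -/
def davg {S A : Type*} [Fintype S] [Fintype A] [DecidableEq S]
    (s₀ : S) (P : S → A → S → ℝ) (π : S → A → ℝ) (H : ℕ) (s : S) (a : A) : ℝ :=
  (1 / H) * ∑ h ∈ range H, occ s₀ P π h s a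

/-- **Optimistic min-max imitation step.** If the bonus `b` is optimistic at the
expert policy, the estimator `Ê` is `ε`-accurate on the class `F ∋ c`, and `π̂`
minimizes over `Π ∋ π^e` the optimistic min-max objective, then the optimistic
cost of `π̂` in the model `P̂` is at most the expert's expected cost plus `2ε`. -/
theorem optimistic_minmax_step
    {S A : Type*} [Fintype S] [Fintype A] [DecidableEq S]
    [Nonempty S] [Nonempty A]
    (s₀ : S) (H : ℕ) (hH : 1 ≤ H)
    (Pstar Phat : S → A → S → ℝ)
    (hPstar : ∀ s a, (∀ s', 0 ≤ Pstar s a s') ∧ ∑ s', Pstar s a s' = 1)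
    (hPhat : ∀ s a, (∀ s', 0 ≤ Phat s a s') ∧ ∑ s', Phat s a s' = 1)
    (Pi : Set (S → A → ℝ))
    (hPi : ∀ π ∈ Pi, ∀ s, (∀ a, 0 ≤ π s a) ∧ ∑ a, π s a = 1)
    (πe : S → A → ℝ) (hπe : πe ∈ Pi)
    (F : Finset (S → ℝ))
    (hFbdd : ∀ f ∈ F, ∀ s, f s ∈ Set.Icc (0 : ℝ) 1)
    (c : S → ℝ) (hcF : c ∈ F)
    (b : S → A → ℝ) (hb : ∀ s a, 0 ≤ b s a)
    (hoptimism : ∀ f ∈ F,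
      (∑ s, ∑ a, davg s₀ Phat πe H s a * (f s - b s a)) ≤
        ∑ s, ∑ a, davg s₀ Pstar πe H s a * f s)
    (Ehat : (S → ℝ) → ℝ) (ε : ℝ)
    (hEhat : ∀ f ∈ F,
      |(∑ s, ∑ a, davg s₀ Pstar πe H s a * f s) - Ehat f| ≤ ε)
    (πhat : S → A → ℝ) (hπhat : πhat ∈ Pi)
    (hmin : ∀ π ∈ Pi,
      (F.sup' ⟨c, hcF⟩ fun f =>
          (∑ s, ∑ a, davg s₀ Phat πhat H s a * (f s - b s a)) - Ehat f) ≤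
        F.sup' ⟨c, hcF⟩ fun f =>
          (∑ s, ∑ a, davg s₀ Phat π H s a * (f s - b s a)) - Ehat f) :
    (∑ s, ∑ a, davg s₀ Phat πhat H s a * (c s - b s a)) ≤
      (∑ s, ∑ a, davg s₀ Pstar πe H s a * c s) + 2 * ε := by
  have h1 := (Finset.le_sup' (fun f =>
      (∑ s, ∑ a, davg s₀ Phat πhat H s a * (f s - b s a)) - Ehat f) hcF).trans (hmin πe hπe)
  have h2 : (F.sup' ⟨c, hcF⟩ fun f =>
      (∑ s, ∑ a, davg s₀ Phat πe H s a * (f s - b s a)) - Ehat f) ≤ ε := by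
    apply Finset.sup'_le
    intro f hf
    have h3 := hoptimism f hf
    have h4 := (abs_le.mp (hEhat f hf)).2
    linarith
  have h5 := (abs_le.mp (hEhat c hcF)).1
  have h6 := h1.trans h2
  linarith

end
end

section
/- Per-iteration regret bound (intermediate claim in the proof of the main theorem). Consider a finite-horizon MDP with finite S, A, initial state s₀, horizon H ≥ 1, true transition kernel P*, and true cost c : S → [0,1]. Let P̂ be a transition kernel and σ : S × A → ℝ≥0 satisfy ‖P̂(·|s,a) − P*(·|s,a)‖₁ ≤ min{σ(s,a), 2} for all (s,a). Define the bonus b(s,a) := H · min{σ(s,a), 2} and the optimistic cost c̃(s,a) := c(s) − b(s,a). Let π be any policy and π^e the expert policy, and suppose V^{π}_{P̂; c̃} ≤ V^{π^e}_{P*; c} + 2Hε for some ε ≥ 0. Then V^{π}_{P*; c} − V^{π^e}_{P*; c} ≤ 6 H³ · E_{(s,a)∼d^{π}_{P*}}[ min{σ(s,a), 1} ] + 2 H ε. -/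
open Finset

noncomputable section

lemma Vsteps_abs_le {S A : Type*} [Fintype S] [Fintype A]
    (P : S → A → S → ℝ) (π : S → A → ℝ) (g : S → A → ℝ) (B : ℝ)
    (hP : ∀ s a, (∀ s', 0 ≤ P s a s') ∧ ∑ s', P s a s' = 1)
    (hπ : ∀ s, (∀ a, 0 ≤ π s a) ∧ ∑ a, π s a = 1)
    (hg : ∀ s a, |g s a| ≤ B) (k : ℕ) (s : S) :
    |Vsteps P π g k s| ≤ B * k := by
  induction k generalizing s with
  | zero => simp [Vsteps]
  | succ k ih =>
    rw [Vsteps]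
    have h1 : ∀ a, |∑ s', P s a s' * Vsteps P π g k s'| ≤ B * k := by
      intro a
      calc |∑ s', P s a s' * Vsteps P π g k s'|
          ≤ ∑ s', |P s a s' * Vsteps P π g k s'| := abs_sum_le_sum_abs _ _
        _ ≤ ∑ s', P s a s' * (B * k) := by
            refine sum_le_sum fun s' _ => ?_
            rw [abs_mul, abs_of_nonneg ((hP s a).1 s')]
            exact mul_le_mul_of_nonneg_left (ih s') ((hP s a).1 s')
        _ = B * k := by rw [← sum_mul, (hP s a).2, one_mul]
    calc |∑ a, π s a * (g s a + ∑ s', P s a s' * Vsteps P π g k s')|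
        ≤ ∑ a, |π s a * (g s a + ∑ s', P s a s' * Vsteps P π g k s')| :=
          abs_sum_le_sum_abs _ _
      _ ≤ ∑ a, π s a * (B * (k + 1 : ℕ)) := by
          refine sum_le_sum fun a _ => ?_
          rw [abs_mul, abs_of_nonneg ((hπ s).1 a)]
          refine mul_le_mul_of_nonneg_left ?_ ((hπ s).1 a)
          refine (abs_add_le _ _).trans ?_
          push_cast
          linarith [h1 a, hg s a]
      _ = B * (k + 1 : ℕ) := by rw [← sum_mul, (hπ s).2, one_mul]

lemma sum_stateDist_Vsteps {S A : Type*} [Fintype S] [Fintype A] [DecidableEq S]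
    (s₀ : S) (P : S → A → S → ℝ) (π : S → A → ℝ) (g : S → A → ℝ) (k h : ℕ) :
    ∑ s, stateDist s₀ P π h s * Vsteps P π g k s =
      ∑ i ∈ range k, ∑ s, ∑ a, occ s₀ P π (h + i) s a * g s a := by
  induction k generalizing h with
  | zero => simp [Vsteps]
  | succ k ih =>
    rw [sum_range_succ']
    have e : ∑ i ∈ range k, ∑ s, ∑ a, occ s₀ P π (h + (i + 1)) s a * g s a
        = ∑ s, stateDist s₀ P π (h + 1) s * Vsteps P π g k s := by
      rw [ih]
      refine sum_congr rfl fun i _ => ?_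
      rw [show h + (i + 1) = h + 1 + i by ring]
    rw [e]
    have e2 : ∑ s, stateDist s₀ P π (h + 1) s * Vsteps P π g k s
        = ∑ s, ∑ a, stateDist s₀ P π h s * π s a * ∑ s', P s a s' * Vsteps P π g k s' := by
      simp only [stateDist, sum_mul, mul_sum]
      rw [sum_comm]
      refine sum_congr rfl fun s _ => ?_
      rw [sum_comm]
      refine sum_congr rfl fun a _ => sum_congr rfl fun s' _ => ?_
      ring
    rw [e2, ← sum_add_distrib]
    refine sum_congr rfl fun s _ => ?_
    rw [Vsteps, mul_sum, ← sum_add_distrib]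
    refine sum_congr rfl fun a _ => ?_
    simp only [occ, add_zero]
    ring

/-- **Per-iteration regret bound.** Under a calibrated model and the optimistic
cost `c̃(s,a) = c(s) − H·min{σ(s,a),2}`, if
`V^π_{P̂;c̃} ≤ V^{π^e}_{P*;c} + 2Hε`, then
`V^π_{P*;c} − V^{π^e}_{P*;c} ≤ 6H³·E_{(s,a)∼d^π_{P*}}[min{σ(s,a),1}] + 2Hε`. -/
theorem per_iteration_regret
    {S A : Type*} [Fintype S] [Fintype A] [DecidableEq S]
    [Nonempty S] [Nonempty A]
    (s₀ : S) (H : ℕ) (hH : 1 ≤ H)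
    (Pstar Phat : S → A → S → ℝ)
    (hPstar : ∀ s a, (∀ s', 0 ≤ Pstar s a s') ∧ ∑ s', Pstar s a s' = 1)
    (hPhat : ∀ s a, (∀ s', 0 ≤ Phat s a s') ∧ ∑ s', Phat s a s' = 1)
    (σ : S → A → ℝ) (hσ : ∀ s a, 0 ≤ σ s a)
    (hcal : ∀ s a, ∑ s', |Phat s a s' - Pstar s a s'| ≤ min (σ s a) 2)
    (c : S → ℝ) (hc : ∀ s, c s ∈ Set.Icc (0 : ℝ) 1)
    (b : S → A → ℝ) (hb : ∀ s a, b s a = H * min (σ s a) 2)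
    (π πe : S → A → ℝ)
    (hπ : ∀ s, (∀ a, 0 ≤ π s a) ∧ ∑ a, π s a = 1)
    (hπe : ∀ s, (∀ a, 0 ≤ πe s a) ∧ ∑ a, πe s a = 1)
    (ε : ℝ) (hε : 0 ≤ ε)
    (hopt : Vh H Phat π (fun s a => c s - b s a) 0 s₀ ≤
      Vh H Pstar πe (fun s _ => c s) 0 s₀ + 2 * H * ε) :
    Vh H Pstar π (fun s _ => c s) 0 s₀ - Vh H Pstar πe (fun s _ => c s) 0 s₀ ≤
      6 * H ^ 3 * (∑ s, ∑ a, davg s₀ Pstar π H s a * min (σ s a) 1) +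
        2 * H * ε := by
  have hH1 : (1 : ℝ) ≤ H := by exact_mod_cast hH
  set gh : S → A → ℝ := fun s a => c s - b s a with hgh
  have hmin : ∀ s a, 0 ≤ min (σ s a) 2 ∧ min (σ s a) 2 ≤ 2 ∧
      min (σ s a) 2 ≤ 2 * min (σ s a) 1 := by
    intro s a
    have := hσ s a
    refine ⟨le_min this (by norm_num), min_le_right _ _, ?_⟩
    rcases le_total (σ s a) 1 with h | h
    · rw [min_eq_left h]
      linarith [min_le_left (σ s a) 2]
    · rw [min_eq_right h]
      linarith [min_le_right (σ s a) 2]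
  have hgB : ∀ s a, |gh s a| ≤ 2 * H := by
    intro s a
    obtain ⟨h0, h2, -⟩ := hmin s a
    obtain ⟨c0, c1⟩ := hc s
    simp only [hgh, hb]
    rw [abs_le]
    constructor <;> nlinarith
  have hV := Vsteps_abs_le Phat π gh (2 * H) hPhat hπ hgB
  have key : ∀ k : ℕ, k ≤ H → ∀ s, Vsteps Pstar π (fun s _ => c s) k s - Vsteps Phat π gh k s
      ≤ Vsteps Pstar π (fun s a => 6 * H ^ 2 * min (σ s a) 1) k s := by
    intro k
    induction k with
    | zero => intro _ s; simp [Vsteps]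
    | succ k ih =>
      intro hk s
      simp only [Vsteps]
      rw [← sum_sub_distrib]
      refine sum_le_sum fun a _ => ?_
      rw [← mul_sub]
      refine mul_le_mul_of_nonneg_left ?_ ((hπ s).1 a)
      obtain ⟨h0, h2, h3⟩ := hmin s a
      have hkH : (k : ℝ) + 1 ≤ H := by exact_mod_cast hk
      have e1 : ∑ s', Pstar s a s' * Vsteps Pstar π (fun s _ => c s) k s'
          - ∑ s', Pstar s a s' * Vsteps Phat π gh k s'
          ≤ ∑ s', Pstar s a s' * Vsteps Pstar π (fun s a => 6 * H ^ 2 * min (σ s a) 1) k s' := by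
        rw [← sum_sub_distrib]
        refine sum_le_sum fun s' _ => ?_
        rw [← mul_sub]
        exact mul_le_mul_of_nonneg_left (ih (by omega) s') ((hPstar s a).1 s')
      have e2 : ∑ s', Pstar s a s' * Vsteps Phat π gh k s'
          - ∑ s', Phat s a s' * Vsteps Phat π gh k s' ≤ min (σ s a) 2 * (2 * H * k) := by
        rw [← sum_sub_distrib]
        calc ∑ s', (Pstar s a s' * Vsteps Phat π gh k s' - Phat s a s' * Vsteps Phat π gh k s')
            ≤ ∑ s', |Phat s a s' - Pstar s a s'| * (2 * H * k) := by
              refine sum_le_sum fun s' _ => ?_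
              rw [← sub_mul]
              refine (le_abs_self _).trans ?_
              rw [abs_mul, abs_sub_comm]
              exact mul_le_mul_of_nonneg_left (hV k s') (abs_nonneg _)
          _ ≤ _ := by
              rw [← sum_mul]
              exact mul_le_mul_of_nonneg_right (hcal s a) (by positivity)
      have e3 : (H : ℝ) * min (σ s a) 2 + min (σ s a) 2 * (2 * H * k)
          ≤ 6 * H ^ 2 * min (σ s a) 1 := by
        have f1 : (H : ℝ) + 2 * H * k ≤ 3 * H ^ 2 := by nlinarith
        calc (H : ℝ) * min (σ s a) 2 + min (σ s a) 2 * (2 * H * k)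
            = (H + 2 * H * k) * min (σ s a) 2 := by ring
          _ ≤ 3 * H ^ 2 * min (σ s a) 2 := mul_le_mul_of_nonneg_right f1 h0
          _ ≤ 3 * H ^ 2 * (2 * min (σ s a) 1) := mul_le_mul_of_nonneg_left h3 (by positivity)
          _ = _ := by ring
      have e4 : gh s a = c s - H * min (σ s a) 2 := by simp only [hgh, hb]
      rw [e4]
      linarith
  have hk := key H le_rfl s₀
  have hs := sum_stateDist_Vsteps s₀ Pstar π (fun s a => 6 * H ^ 2 * min (σ s a) 1) H 0
  have e5 : ∑ s, stateDist s₀ Pstar π 0 s *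
      Vsteps Pstar π (fun s a => 6 * H ^ 2 * min (σ s a) 1) H s
      = Vsteps Pstar π (fun s a => 6 * H ^ 2 * min (σ s a) 1) H s₀ := by
    simp [stateDist]
  have e6 : ∑ i ∈ range H, ∑ s, ∑ a, occ s₀ Pstar π (0 + i) s a * (6 * H ^ 2 * min (σ s a) 1)
      = 6 * H ^ 3 * (∑ s, ∑ a, davg s₀ Pstar π H s a * min (σ s a) 1) := by
    have hne : (H : ℝ) ≠ 0 := by positivity
    rw [sum_comm, mul_sum]
    refine sum_congr rfl fun s _ => ?_
    rw [sum_comm, mul_sum]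
    refine sum_congr rfl fun a _ => ?_
    simp only [davg, zero_add]
    rw [← sum_mul]
    field_simp
  rw [e5, e6] at hs
  simp only [Vh, Nat.sub_zero] at hopt ⊢
  linarith

end
end
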